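/- arXiv:2406.02599 — 3 statements merged into one kernel-verified Lean document; each statement's English description precedes it below -/
import Mathlib

section
/- (Theorem 2, error of ERM) For every 1 ≤ j ≤ m−1 and every x ∈ [B_j, B_{j+1}), the mean absolute error of the ERM mechanism with uniform bins satisfies Σ_{i=1}^{m} p(x,i)·|B_i − x| ≤ (4/γ)·log(m)·(c+Δ) + (2c+2Δ)/(m−1). -/
/-!
Draw a left bin `B l` (`l ≤ j`) from `q_j` and, independently, a right bin `B r` (`r ≥ j + 1`) from
the reflected `q_{m-j}`. The mechanism outputs one of the two by unbiased randomized rounding, so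
with `a = x - B l` and `b = B r - x` the conditional error is `2ab/(a+b) ≤ (a+b)/2`, that is, half
of `(B j - B l) + (B r - B (j+1)) + h`, where `h` is the bin width.

Each of the two selection gaps has small mean: a Gibbs distribution with weights `exp (-f i)` on
`n` points with `f` vanishing somewhere has mean energy at most `log n`
(`sum_exp_neg_mul_le`), so the mean gap is at most `(2/γ) log m` times the range of the bins
concerned (`sum_qERM_mul_le`). The two ranges add up to at most `2c + 2Δ`. This yields the bound
with a factor `1/2` to spare.
-/

open Finset

/-- Output distribution of the quantization mechanism: for input `x ∈ [B j, B (j+1))`,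
`outProb m B q j x i` is the probability that the output is bin `B i`. -/
noncomputable def outProb (m : ℕ) (B : ℕ → ℝ) (q : ℕ → ℕ → ℝ) (j : ℕ) (x : ℝ) (i : ℕ) : ℝ :=
  if i ≤ j then
    q j i * ∑ r ∈ Finset.Icc (j + 1) m, q (m - j) (m - r + 1) * ((B r - x) / (B r - B i))
  else
    q (m - j) (m + 1 - i) * ∑ l ∈ Finset.Icc 1 j, q j l * ((x - B l) / (B i - B l))

/-- ERM selection distribution with parameter `γ`:
`q_j(i) = exp(γ(B i − B j)/(2(B j − B 1))) / Σ_{k=1}^j exp(γ(B k − B j)/(2(B j − B 1)))`.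
(At `j = 1` this evaluates to `q_1(1) = 1`, since in Lean `0/0 = 0` and `exp 0 = 1`.) -/
noncomputable def qERM (γ : ℝ) (B : ℕ → ℝ) (j i : ℕ) : ℝ :=
  Real.exp (γ * (B i - B j) / (2 * (B j - B 1))) /
    ∑ k ∈ Finset.Icc 1 j, Real.exp (γ * (B k - B j) / (2 * (B j - B 1)))

/-- Entropy bound for Gibbs weights: the mean energy is at most the log of the number of states,
as soon as one state has zero energy (so that the partition function is at least `1`). -/
lemma sum_exp_neg_mul_le (s : Finset ℕ) (f : ℕ → ℝ) (i₀ : ℕ) (hi₀ : i₀ ∈ s) (hf : f i₀ = 0) :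
    ∑ i ∈ s, Real.exp (-f i) * f i ≤ Real.log (s.card : ℝ) * ∑ i ∈ s, Real.exp (-f i) := by
  have hn : (0 : ℝ) < s.card := by exact_mod_cast Finset.card_pos.mpr ⟨i₀, hi₀⟩
  have hZ : 1 ≤ ∑ i ∈ s, Real.exp (-f i) := by
    have h := Finset.single_le_sum (f := fun i => Real.exp (-f i))
      (fun i _ => (Real.exp_pos _).le) hi₀
    simpa [hf] using h
  -- `log t ≤ t - 1` at `t = exp (f i) / n`
  have hterm : ∀ i ∈ s, Real.exp (-f i) * f i - Real.log (s.card : ℝ) * Real.exp (-f i) ≤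
      1 / (s.card : ℝ) - Real.exp (-f i) := by
    intro i _
    have h1 := Real.log_le_sub_one_of_pos (div_pos (Real.exp_pos (f i)) hn)
    rw [Real.log_div (Real.exp_pos _).ne' hn.ne', Real.log_exp] at h1
    have h2 := mul_le_mul_of_nonneg_left h1 (Real.exp_pos (-f i)).le
    have h3 : Real.exp (-f i) * Real.exp (f i) = 1 := by
      rw [← Real.exp_add]; simp
    have h4 : Real.exp (-f i) * (Real.exp (f i) / s.card - 1) =
        1 / (s.card : ℝ) - Real.exp (-f i) := by
      rw [mul_sub, ← mul_div_assoc, h3, mul_one]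
    linarith
  have hsum := Finset.sum_le_sum hterm
  rw [Finset.sum_sub_distrib, Finset.sum_sub_distrib, ← Finset.mul_sum, Finset.sum_const,
    nsmul_eq_mul, mul_one_div_cancel hn.ne'] at hsum
  linarith

lemma qERM_nonneg (γ : ℝ) (B : ℕ → ℝ) (k i : ℕ) : 0 ≤ qERM γ B k i :=
  div_nonneg (Real.exp_pos _).le (Finset.sum_nonneg fun _ _ => (Real.exp_pos _).le)

lemma sum_qERM (γ : ℝ) (B : ℕ → ℝ) (k : ℕ) (hk : 1 ≤ k) :
    ∑ i ∈ Finset.Icc 1 k, qERM γ B k i = 1 := by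
  unfold qERM
  rw [← Finset.sum_div]
  exact div_self (Finset.sum_pos (fun _ _ => Real.exp_pos _) ⟨1, by simp [hk]⟩).ne'

/-- The mean distance of the selected bin from the top bin `B k`. -/
lemma sum_qERM_mul_le (γ : ℝ) (hγ : 0 < γ) (B : ℕ → ℝ) (k : ℕ) (hk : 1 ≤ k)
    (hB : 1 < k → B 1 < B k) :
    ∑ i ∈ Finset.Icc 1 k, qERM γ B k i * (B k - B i) ≤
      2 / γ * Real.log (k : ℝ) * (B k - B 1) := by
  rcases hk.eq_or_lt with rfl | hk1
  · simp
  have hD : 0 < B k - B 1 := sub_pos.mpr (hB hk1)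
  have hg := sum_exp_neg_mul_le (Finset.Icc 1 k)
    (fun i => γ * (B k - B i) / (2 * (B k - B 1))) k (by simp [hk]) (by simp)
  have hneg : ∀ i, -(γ * (B k - B i) / (2 * (B k - B 1))) =
      γ * (B i - B k) / (2 * (B k - B 1)) := by
    intro i; ring
  simp only [hneg, Nat.card_Icc, Nat.add_sub_cancel] at hg
  have hZ : 0 < ∑ i ∈ Finset.Icc 1 k, Real.exp (γ * (B i - B k) / (2 * (B k - B 1))) :=
    Finset.sum_pos (fun _ _ => Real.exp_pos _) ⟨1, by simp [hk]⟩
  have hrw : ∑ i ∈ Finset.Icc 1 k, qERM γ B k i * (B k - B i) =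
      2 / γ * (B k - B 1) * ((∑ i ∈ Finset.Icc 1 k,
        Real.exp (γ * (B i - B k) / (2 * (B k - B 1))) *
          (γ * (B k - B i) / (2 * (B k - B 1)))) /
        ∑ i ∈ Finset.Icc 1 k, Real.exp (γ * (B i - B k) / (2 * (B k - B 1)))) := by
    unfold qERM
    rw [Finset.sum_div, Finset.mul_sum]
    refine Finset.sum_congr rfl fun i _ => ?_
    generalize Real.exp (γ * (B i - B k) / (2 * (B k - B 1))) = w
    field_simp
  rw [hrw]
  calc _ ≤ 2 / γ * (B k - B 1) * Real.log (k : ℝ) := by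
        gcongr
        exact (div_le_iff₀ hZ).mpr hg
    _ = _ := by ring

/-- The reflection `r ↦ m - r + 1` carries the bins above `j` onto the first `m - j` bins. -/
lemma sum_reflect (m j : ℕ) (g : ℕ → ℝ) :
    ∑ r ∈ Finset.Icc (j + 1) m, g (m - r + 1) = ∑ i ∈ Finset.Icc 1 (m - j), g i := by
  refine Finset.sum_nbij' (fun r => m - r + 1) (fun i => m - i + 1) ?_ ?_ ?_ ?_ ?_ <;>
    (intro r hr; simp only [Finset.mem_Icc] at hr ⊢; try omega)

/-- The error of unbiased rounding to one of two points at distances `a` and `b`. -/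
lemma two_point_error (a b : ℝ) (ha : 0 ≤ a) (hb : 0 < b) :
    b / (a + b) * a + a / (a + b) * b ≤ (a + b) / 2 := by
  have h : 0 < a + b := by linarith
  have : b / (a + b) * a + a / (a + b) * b = 2 * a * b / (a + b) := by ring
  rw [this, div_le_iff₀ h]
  nlinarith [sq_nonneg (a - b)]

/-- (Theorem 2, error of ERM) For every `x ∈ [B j, B (j+1))`, the mean absolute error of the
ERM mechanism with uniform bins satisfies
`Σ_{i=1}^m p(x,i)|B i − x| ≤ (4/γ) log(m) (c+Δ) + (2c+2Δ)/(m−1)`. -/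
theorem erm_error_bound
    (m : ℕ) (hm : 2 ≤ m)
    (c Δ : ℝ) (hc : 0 < c) (hΔ : 0 ≤ Δ)
    (B : ℕ → ℝ)
    (hB : ∀ i : ℕ, 1 ≤ i → i ≤ m →
      B i = -c - Δ + ((i : ℝ) - 1) * ((2 * c + 2 * Δ) / ((m : ℝ) - 1)))
    (γ : ℝ) (hγ : 0 < γ)
    (j : ℕ) (hj1 : 1 ≤ j) (hj2 : j ≤ m - 1)
    (x : ℝ) (hx1 : B j ≤ x) (hx2 : x < B (j + 1)) :
    ∑ i ∈ Finset.Icc 1 m, outProb m B (qERM γ B) j x i * |B i - x| ≤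
      4 / γ * Real.log (m : ℝ) * (c + Δ) + (2 * c + 2 * Δ) / ((m : ℝ) - 1) := by
  set h : ℝ := (2 * c + 2 * Δ) / ((m : ℝ) - 1) with hh
  have hm1 : (0 : ℝ) < (m : ℝ) - 1 := by
    have : (2 : ℝ) ≤ m := by exact_mod_cast hm
    linarith
  have hhpos : 0 < h := div_pos (by linarith) hm1
  have hhm : ((m : ℝ) - 1) * h = 2 * c + 2 * Δ := mul_div_cancel₀ _ hm1.ne'
  have hjm : j + 1 ≤ m := by omega
  have hgap : ∀ a b : ℕ, 1 ≤ a → a ≤ m → 1 ≤ b → b ≤ m → B b - B a = ((b : ℝ) - a) * h := by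
    intro a b ha ha' hb hb'
    rw [hB a ha ha', hB b hb hb']; ring
  have hmono : ∀ a b : ℕ, 1 ≤ a → a ≤ b → b ≤ m → B a ≤ B b := by
    intro a b ha hab hb
    have h1 := hgap a b ha (hab.trans hb) (ha.trans hab) hb
    have h2 : (a : ℝ) ≤ b := by exact_mod_cast hab
    have h3 := mul_nonneg (sub_nonneg.mpr h2) hhpos.le
    linarith
  have hstrict : ∀ k : ℕ, k ≤ m → 1 < k → B 1 < B k := by
    intro k hk hk1
    have h1 := hgap 1 k le_rfl (by omega) hk1.le hk
    have h2 : ((1 : ℕ) : ℝ) < k := by exact_mod_cast hk1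
    have h3 := mul_pos (sub_pos.mpr h2) hhpos
    linarith
  set P : ℕ → ℝ := qERM γ B j with hP
  set Q : ℕ → ℝ := fun r => qERM γ B (m - j) (m - r + 1) with hQ
  have hP0 : ∀ l, 0 ≤ P l := fun l => qERM_nonneg _ _ _ _
  have hQ0 : ∀ r, 0 ≤ Q r := fun r => qERM_nonneg _ _ _ _
  have hP1 : ∑ l ∈ Finset.Icc 1 j, P l = 1 := sum_qERM γ B j hj1
  have hQ1 : ∑ r ∈ Finset.Icc (j + 1) m, Q r = 1 := by
    rw [hQ, sum_reflect m j (qERM γ B (m - j))]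
    exact sum_qERM γ B (m - j) (by omega)
  have hPE : ∑ l ∈ Finset.Icc 1 j, P l * (B j - B l) ≤
      2 / γ * Real.log (m : ℝ) * (B j - B 1) := by
    refine (sum_qERM_mul_le γ hγ B j hj1 (hstrict j (by omega))).trans ?_
    have := hmono 1 j le_rfl hj1 (by omega)
    have : (0 : ℝ) < j := by exact_mod_cast hj1
    have : (j : ℝ) ≤ m := by exact_mod_cast (by omega : j ≤ m)
    gcongr
  have hQE : ∑ r ∈ Finset.Icc (j + 1) m, Q r * (B r - B (j + 1)) ≤
      2 / γ * Real.log (m : ℝ) * (B m - B (j + 1)) := by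
    -- uniform spacing makes gaps invariant under the reflection
    have hcongr : ∑ r ∈ Finset.Icc (j + 1) m, Q r * (B r - B (j + 1)) =
        ∑ r ∈ Finset.Icc (j + 1) m,
          qERM γ B (m - j) (m - r + 1) * (B (m - j) - B (m - r + 1)) := by
      refine Finset.sum_congr rfl fun r hr => ?_
      rw [Finset.mem_Icc] at hr
      rw [hgap (j + 1) r (by omega) (by omega) (by omega) (by omega),
        hgap (m - r + 1) (m - j) (by omega) (by omega) (by omega) (by omega)]
      push_cast [Nat.cast_sub hr.2, Nat.cast_sub (by omega : j ≤ m)]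
      ring
    have hrange : B m - B (j + 1) = B (m - j) - B 1 := by
      rw [hgap (j + 1) m (by omega) (by omega) (by omega) (by omega),
        hgap 1 (m - j) (by omega) (by omega) (by omega) (by omega)]
      push_cast [Nat.cast_sub (by omega : j ≤ m)]
      ring
    rw [hcongr, hrange,
      sum_reflect m j (fun i => qERM γ B (m - j) i * (B (m - j) - B i))]
    refine (sum_qERM_mul_le γ hγ B (m - j) (by omega) (hstrict (m - j) (by omega))).trans ?_
    have := hmono 1 (m - j) le_rfl (by omega) (by omega)
    have : (0 : ℝ) < (m - j : ℕ) := by exact_mod_cast (by omega : 0 < m - j)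
    have : ((m - j : ℕ) : ℝ) ≤ m := by exact_mod_cast (by omega : m - j ≤ m)
    gcongr
  have hsplit : Finset.Icc 1 m = Finset.Icc 1 j ∪ Finset.Icc (j + 1) m := by
    ext i; simp only [Finset.mem_union, Finset.mem_Icc]; omega
  have hdisj : Disjoint (Finset.Icc 1 j) (Finset.Icc (j + 1) m) := by
    rw [Finset.disjoint_left]; intro i; simp only [Finset.mem_Icc]; omega
  have hleft : ∑ i ∈ Finset.Icc 1 j, outProb m B (qERM γ B) j x i * |B i - x| =
      ∑ l ∈ Finset.Icc 1 j, ∑ r ∈ Finset.Icc (j + 1) m,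
        P l * Q r * ((B r - x) / (B r - B l) * (x - B l)) := by
    refine Finset.sum_congr rfl fun l hl => ?_
    rw [Finset.mem_Icc] at hl
    have hlx := hmono l j hl.1 hl.2 (by omega)
    rw [outProb, if_pos hl.2, abs_of_nonpos (by linarith), Finset.mul_sum, Finset.sum_mul]
    refine Finset.sum_congr rfl fun r _ => ?_
    simp only [hP, hQ]; ring
  have hright : ∑ i ∈ Finset.Icc (j + 1) m, outProb m B (qERM γ B) j x i * |B i - x| =
      ∑ l ∈ Finset.Icc 1 j, ∑ r ∈ Finset.Icc (j + 1) m,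
        P l * Q r * ((x - B l) / (B r - B l) * (B r - x)) := by
    rw [Finset.sum_comm]
    refine Finset.sum_congr rfl fun r hr => ?_
    rw [Finset.mem_Icc] at hr
    have hrx := hmono (j + 1) r (by omega) hr.1 hr.2
    rw [outProb, if_neg (by omega), abs_of_nonneg (by linarith), Finset.mul_sum, Finset.sum_mul,
      (by omega : m + 1 - r = m - r + 1)]
    refine Finset.sum_congr rfl fun l _ => ?_
    simp only [hP, hQ]; ring
  have hstep : B (j + 1) - B j = h := by
    rw [hgap j (j + 1) hj1 (by omega) (by omega) hjm]; push_cast; ring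
  have hpair : ∀ l ∈ Finset.Icc 1 j, ∀ r ∈ Finset.Icc (j + 1) m,
      P l * Q r * ((B r - x) / (B r - B l) * (x - B l)) +
        P l * Q r * ((x - B l) / (B r - B l) * (B r - x)) ≤
      1 / 2 * (P l * (B j - B l) * Q r + P l * (Q r * (B r - B (j + 1))) + h * (P l * Q r)) := by
    intro l hl r hr
    rw [Finset.mem_Icc] at hl hr
    have hlx := hmono l j hl.1 hl.2 (by omega)
    have hrx := hmono (j + 1) r (by omega) hr.1 hr.2
    have h1 := two_point_error (x - B l) (B r - x) (by linarith) (by linarith)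
    rw [(by ring : x - B l + (B r - x) = B r - B l)] at h1
    have h2 := mul_le_mul_of_nonneg_left h1 (mul_nonneg (hP0 l) (hQ0 r))
    rw [← hstep]
    linarith
  have hlog : 0 ≤ 2 / γ * Real.log (m : ℝ) :=
    mul_nonneg (by positivity) (Real.log_natCast_nonneg m)
  rw [hsplit, Finset.sum_union hdisj, hleft, hright, ← Finset.sum_add_distrib]
  simp only [← Finset.sum_add_distrib]
  refine (Finset.sum_le_sum fun l hl => Finset.sum_le_sum fun r hr => hpair l hl r hr).trans ?_
  simp only [← Finset.mul_sum, Finset.sum_add_distrib, hQ1, ← Finset.sum_mul, hP1, mul_one,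
    one_mul]
  have hW : B m - B 1 = 2 * c + 2 * Δ := by
    rw [hgap 1 m le_rfl (by omega) (by omega) le_rfl, ← hhm]; push_cast; ring
  have hbound : 2 / γ * Real.log (m : ℝ) * (B j - B 1) +
      2 / γ * Real.log (m : ℝ) * (B m - B (j + 1)) ≤
      2 / γ * Real.log (m : ℝ) * (2 * c + 2 * Δ) := by
    rw [← mul_add]
    exact mul_le_mul_of_nonneg_left (by linarith) hlog
  have hfin : 4 / γ * Real.log (m : ℝ) * (c + Δ) =
      2 / γ * Real.log (m : ℝ) * (2 * c + 2 * Δ) := by ring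
  have hnn : 0 ≤ 2 / γ * Real.log (m : ℝ) * (2 * c + 2 * Δ) :=
    mul_nonneg hlog (by linarith)
  rw [hfin]
  linarith
end

section
/- (Theorem 3, uniform input) The mean absolute error against the uniform input distribution on [−c,c] satisfies ∫_{−c}^{c} ( Σ_{i=1}^{m} p(x,i)·|B_i − x| ) dx ≤ (B_s + c)·(ζ_{m−s+1} + (B_s − B_{s−1}) + ζ_{s−1}) + Σ_{n=s}^{t−1} (B_{n+1} − B_n)·(ζ_{m−n} + (B_{n+1} − B_n) + ζ_n) + (c − B_t)·(ζ_{m−t} + (B_{t+1} − B_t) + ζ_t). -/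
/-!
Fix `x ∈ [B j, B (j+1))` and write `a i = q j i` for `i ≤ j`, `b r = q (m - j) (m - r + 1)` for
`r > j`; both are probability weights. Collecting the terms of the lower and the upper half of the
output distribution, the expected absolute error at `x` equals
`∑ i ≤ j, ∑ r > j, a i * b r * (2 * (x - B i) * (B r - x) / (B r - B i))`.
With `u = x - B i ≥ 0` and `v = B r - x > 0`, the inequality `2uv ≤ (u + v)²` bounds each fraction by
`B r - B i`. Splitting `B r - B i` at `B (j+1)` and `B j`, and using the symmetry of the bins for the
part above `B (j+1)`, the sum becomes `ζ_{m-j} + (B (j+1) - B j) + ζ_j` (`gap_sum_eq`).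

This bound is a step function of `x`, constant on each cell `[B j, B (j+1))`. Its integral
over `[-c, c]` is the sum over the cells that meet this interval, which is the right-hand side.
-/

open Finset

/-- The index `j ∈ {1,…,m−1}` such that `x ∈ [B j, B (j+1))` (for increasing bins and
`x` in range): the largest `j ≤ m−1` with `B j ≤ x`. -/
noncomputable def binIdx (m : ℕ) (B : ℕ → ℝ) (x : ℝ) : ℕ :=
  ((Finset.Icc 1 (m - 1)).filter (fun j => B j ≤ x)).sup id

/-- The output distribution as a function of the input `x`. -/
noncomputable def pFun (m : ℕ) (B : ℕ → ℝ) (q : ℕ → ℕ → ℝ) (x : ℝ) (i : ℕ) : ℝ :=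
  outProb m B q (binIdx m B x) x i

/-- `ζ_n = Σ_{i=1}^n q_n(i) (B n − B i)`. -/
noncomputable def zeta (B : ℕ → ℝ) (q : ℕ → ℕ → ℝ) (n : ℕ) : ℝ :=
  ∑ i ∈ Finset.Icc 1 n, q n i * (B n - B i)

/-- Pointwise bound for the expected absolute error of an input in the `j`-th cell. -/
noncomputable def cellBound (m : ℕ) (B : ℕ → ℝ) (q : ℕ → ℕ → ℝ) (j : ℕ) : ℝ :=
  zeta B q (m - j) + (B (j + 1) - B j) + zeta B q j

lemma sum_Icc_split (f : ℕ → ℝ) {j m : ℕ} (hj : j ≤ m) :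
    ∑ i ∈ Icc 1 m, f i = ∑ i ∈ Icc 1 j, f i + ∑ i ∈ Icc (j + 1) m, f i := by
  rw [← Finset.sum_union]
  · congr 1
    ext i
    simp only [mem_union, mem_Icc]
    omega
  · rw [Finset.disjoint_left]
    intro i
    simp only [mem_Icc]
    omega

lemma sum_Icc_reflect_upper (f : ℕ → ℝ) {j m : ℕ} (hj : j ≤ m) :
    ∑ r ∈ Icc (j + 1) m, f (m - r + 1) = ∑ k ∈ Icc 1 (m - j), f k := by
  refine Finset.sum_nbij' (fun r => m - r + 1) (fun k => m - k + 1) ?_ ?_ ?_ ?_ ?_ <;>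
    intro r hr <;> simp only [mem_Icc] at * <;> omega

lemma binIdx_spec {m : ℕ} {B : ℕ → ℝ} {x : ℝ} (hm : 2 ≤ m) (h1 : B 1 ≤ x) (h2 : x < B m) :
    1 ≤ binIdx m B x ∧ binIdx m B x < m ∧ B (binIdx m B x) ≤ x ∧ x < B (binIdx m B x + 1) := by
  have hne : ((Finset.Icc 1 (m - 1)).filter (fun j => B j ≤ x)).Nonempty :=
    ⟨1, by simp only [mem_filter, mem_Icc]; exact ⟨by omega, h1⟩⟩
  obtain ⟨j, hj, hsup⟩ := Finset.exists_mem_eq_sup _ hne id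
  have hidx : binIdx m B x = j := hsup
  rw [hidx]
  simp only [mem_filter, mem_Icc] at hj
  refine ⟨hj.1.1, by omega, hj.2, ?_⟩
  by_contra! hlt
  by_cases hjm : j + 1 = m
  · rw [hjm] at hlt
    linarith
  · have hle : id (j + 1) ≤ binIdx m B x :=
      Finset.le_sup (f := id) (by simp only [mem_filter, mem_Icc]; exact ⟨by omega, hlt⟩)
    simp only [id] at hle
    omega

lemma binIdx_eq {m : ℕ} {B : ℕ → ℝ}
    (hB : ∀ i j : ℕ, 1 ≤ i → i < j → j ≤ m → B i < B j)
    {j : ℕ} {x : ℝ} (hj1 : 1 ≤ j) (hjm : j < m) (h1 : B j ≤ x) (h2 : x < B (j + 1)) :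
    binIdx m B x = j := by
  have hmono : ∀ i k : ℕ, 1 ≤ i → i ≤ k → k ≤ m → B i ≤ B k := by
    intro i k hi hik hk
    rcases hik.eq_or_lt with rfl | hlt
    · exact le_rfl
    · exact (hB i k hi hlt hk).le
  obtain ⟨k1, km, hk, hk'⟩ := binIdx_spec (m := m) (B := B) (x := x) (by omega)
    ((hmono 1 j le_rfl hj1 hjm.le).trans h1) (h2.trans_le (hmono (j + 1) m (by omega) hjm le_rfl))
  rcases lt_trichotomy (binIdx m B x) j with h | h | h
  · have := hmono (binIdx m B x + 1) j (by omega) h hjm.le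
    linarith
  · exact h
  · have := hmono (j + 1) (binIdx m B x) (by omega) h km.le
    linarith

/-- The weighted double sum of the gaps `B r - B i` over `i ≤ j < r` is the cell bound; the symmetry
of the bins turns `B r - B (j + 1)` into `B (m - j) - B (m + 1 - r)`. -/
lemma gap_sum_eq {m : ℕ} {B : ℕ → ℝ}
    (hsym : ∀ i : ℕ, 1 ≤ i → i ≤ m → B i = -B (m + 1 - i))
    {q : ℕ → ℕ → ℝ} (hq_sum : ∀ n : ℕ, 1 ≤ n → n ≤ m → ∑ i ∈ Finset.Icc 1 n, q n i = 1)
    {j : ℕ} (hj1 : 1 ≤ j) (hjm : j < m) :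
    ∑ i ∈ Icc 1 j, ∑ r ∈ Icc (j + 1) m, q j i * q (m - j) (m - r + 1) * (B r - B i)
      = cellBound m B q j := by
  have ha := hq_sum j hj1 hjm.le
  have hb : ∑ r ∈ Icc (j + 1) m, q (m - j) (m - r + 1) = 1 := by
    rw [sum_Icc_reflect_upper (fun k => q (m - j) k) hjm.le]
    exact hq_sum (m - j) (by omega) (by omega)
  have hz : ∑ r ∈ Icc (j + 1) m, q (m - j) (m - r + 1) * (B r - B (j + 1))
      = zeta B q (m - j) := by
    rw [zeta, ← sum_Icc_reflect_upper (fun k => q (m - j) k * (B (m - j) - B k)) hjm.le]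
    refine Finset.sum_congr rfl fun r hr => ?_
    rw [mem_Icc] at hr
    have e1 := hsym r (by omega) hr.2
    have e2 := hsym (j + 1) (by omega) hjm
    rw [show m + 1 - r = m - r + 1 by omega] at e1
    rw [show m + 1 - (j + 1) = m - j by omega] at e2
    rw [e1, e2]
    ring
  have hinner : ∀ i ∈ Icc 1 j,
      ∑ r ∈ Icc (j + 1) m, q j i * q (m - j) (m - r + 1) * (B r - B i)
      = q j i * (zeta B q (m - j) + (B (j + 1) - B j)) + q j i * (B j - B i) := by
    intro i _
    calc ∑ r ∈ Icc (j + 1) m, q j i * q (m - j) (m - r + 1) * (B r - B i)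
        = q j i * ∑ r ∈ Icc (j + 1) m, q (m - j) (m - r + 1) * (B r - B (j + 1))
          + q j i * (B (j + 1) - B i) * ∑ r ∈ Icc (j + 1) m, q (m - j) (m - r + 1) := by
          rw [Finset.mul_sum, Finset.mul_sum, ← Finset.sum_add_distrib]
          exact Finset.sum_congr rfl fun r _ => by ring
      _ = _ := by rw [hz, hb]; ring
  rw [Finset.sum_congr rfl hinner, Finset.sum_add_distrib, ← Finset.sum_mul, ha, cellBound,
    zeta.eq_1 B q j]
  ring

/-- The expected absolute error at `x ∈ [B j, B (j + 1))` as a double sum over the pairs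
`i ≤ j < r`. -/
lemma abs_error_eq {m : ℕ} {B : ℕ → ℝ}
    (hB : ∀ i j : ℕ, 1 ≤ i → i < j → j ≤ m → B i < B j)
    {q : ℕ → ℕ → ℝ} {j : ℕ} (hj1 : 1 ≤ j) (hjm : j < m)
    {x : ℝ} (h1 : B j ≤ x) (h2 : x < B (j + 1)) :
    ∑ i ∈ Icc 1 m, outProb m B q j x i * |B i - x|
      = ∑ i ∈ Icc 1 j, ∑ r ∈ Icc (j + 1) m, q j i * q (m - j) (m - r + 1) *
          (2 * ((x - B i) * (B r - x)) / (B r - B i)) := by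
  rw [sum_Icc_split _ hjm.le]
  have hlow : ∑ i ∈ Icc 1 j, outProb m B q j x i * |B i - x|
      = ∑ i ∈ Icc 1 j, ∑ r ∈ Icc (j + 1) m, q j i * q (m - j) (m - r + 1) *
          ((x - B i) * (B r - x) / (B r - B i)) := by
    refine Finset.sum_congr rfl fun i hi => ?_
    rw [mem_Icc] at hi
    have hix : B i ≤ x := by
      rcases hi.2.eq_or_lt with rfl | hlt
      · exact h1
      · exact (hB i j hi.1 hlt hjm.le).le.trans h1
    rw [outProb, if_pos hi.2, abs_of_nonpos (by linarith), Finset.mul_sum, Finset.sum_mul]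
    exact Finset.sum_congr rfl fun r _ => by ring
  have hupp : ∑ r ∈ Icc (j + 1) m, outProb m B q j x r * |B r - x|
      = ∑ i ∈ Icc 1 j, ∑ r ∈ Icc (j + 1) m, q j i * q (m - j) (m - r + 1) *
          ((x - B i) * (B r - x) / (B r - B i)) := by
    rw [Finset.sum_comm]
    refine Finset.sum_congr rfl fun r hr => ?_
    rw [mem_Icc] at hr
    have hxr : x ≤ B r := by
      rcases hr.1.eq_or_lt with rfl | hlt
      · exact h2.le
      · exact h2.le.trans (hB (j + 1) r (by omega) hlt hr.2).le
    rw [outProb, if_neg (by omega), abs_of_nonneg (by linarith), Finset.mul_sum, Finset.sum_mul,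
      show m + 1 - r = m - r + 1 by omega]
    exact Finset.sum_congr rfl fun i _ => by ring
  rw [hlow, hupp, ← Finset.sum_add_distrib]
  refine Finset.sum_congr rfl fun i _ => ?_
  rw [← Finset.sum_add_distrib]
  exact Finset.sum_congr rfl fun r _ => by ring

lemma abs_error_nonneg_and_le {m : ℕ} {B : ℕ → ℝ}
    (hB : ∀ i j : ℕ, 1 ≤ i → i < j → j ≤ m → B i < B j)
    (hsym : ∀ i : ℕ, 1 ≤ i → i ≤ m → B i = -B (m + 1 - i))
    {q : ℕ → ℕ → ℝ} (hq_nonneg : ∀ n i : ℕ, 1 ≤ n → n ≤ m → 0 ≤ q n i)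
    (hq_sum : ∀ n : ℕ, 1 ≤ n → n ≤ m → ∑ i ∈ Finset.Icc 1 n, q n i = 1)
    {j : ℕ} (hj1 : 1 ≤ j) (hjm : j < m) {x : ℝ} (h1 : B j ≤ x) (h2 : x < B (j + 1)) :
    0 ≤ ∑ i ∈ Icc 1 m, outProb m B q j x i * |B i - x| ∧
      ∑ i ∈ Icc 1 m, outProb m B q j x i * |B i - x| ≤ cellBound m B q j := by
  rw [abs_error_eq hB hj1 hjm h1 h2, ← gap_sum_eq hsym hq_sum hj1 hjm]
  have key : ∀ i ∈ Icc 1 j, ∀ r ∈ Icc (j + 1) m,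
      0 ≤ q j i * q (m - j) (m - r + 1) ∧ 0 ≤ x - B i ∧ 0 < B r - x := by
    intro i hi r hr
    rw [mem_Icc] at hi hr
    refine ⟨mul_nonneg (hq_nonneg _ _ hj1 hjm.le) (hq_nonneg _ _ (by omega) (by omega)), ?_, ?_⟩
    · rcases hi.2.eq_or_lt with rfl | hlt
      · linarith
      · linarith [hB i j hi.1 hlt hjm.le]
    · rcases hr.1.eq_or_lt with rfl | hlt
      · linarith
      · linarith [hB (j + 1) r (by omega) hlt hr.2]
  constructor
  · refine Finset.sum_nonneg fun i hi => Finset.sum_nonneg fun r hr => ?_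
    obtain ⟨hw, hu, hv⟩ := key i hi r hr
    exact mul_nonneg hw (div_nonneg (by positivity) (by linarith))
  · refine Finset.sum_le_sum fun i hi => Finset.sum_le_sum fun r hr => ?_
    obtain ⟨hw, hu, hv⟩ := key i hi r hr
    refine mul_le_mul_of_nonneg_left ?_ hw
    rw [div_le_iff₀ (by linarith)]
    -- `2uv ≤ (u + v)²` with `u = x - B i`, `v = B r - x`
    nlinarith [sq_nonneg (x - B i), sq_nonneg (B r - x)]

/-- The step function bounding the error is constant on the interior of a cell, so on any
subinterval of the closed cell it integrates to length times value. -/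
lemma integral_cell {m : ℕ} {B : ℕ → ℝ}
    (hB : ∀ i j : ℕ, 1 ≤ i → i < j → j ≤ m → B i < B j)
    (K : ℕ → ℝ) {j : ℕ} (hj1 : 1 ≤ j) (hjm : j < m) {a b : ℝ}
    (hab : a ≤ b) (ha : B j ≤ a) (hb : b ≤ B (j + 1)) :
    IntervalIntegrable (fun x => K (binIdx m B x)) MeasureTheory.volume a b ∧
      ∫ x in a..b, K (binIdx m B x) = (b - a) * K j := by
  have heq : Set.EqOn (fun _ => K j) (fun x => K (binIdx m B x)) (Set.Ioo a b) := by
    intro x hx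
    simp only
    rw [binIdx_eq hB hj1 hjm (ha.trans hx.1.le) (hx.2.trans_le hb)]
  constructor
  · refine IntervalIntegrable.congr_uIoo (f := fun _ => K j) intervalIntegrable_const ?_
    rwa [Set.uIoo_of_le hab]
  · rw [← intervalIntegral.integral_congr_Ioo_of_le hab heq, intervalIntegral.integral_const,
      smul_eq_mul]

/-- (Theorem 3, uniform input) The mean absolute error against the uniform input distribution
on `[−c,c]` satisfies
`∫_{−c}^c Σ_{i=1}^m p(x,i)|B i − x| dx ≤ (B s + c)(ζ_{m−s+1} + (B s − B (s−1)) + ζ_{s−1})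
 + Σ_{n=s}^{t−1} (B (n+1) − B n)(ζ_{m−n} + (B (n+1) − B n) + ζ_n)
 + (c − B t)(ζ_{m−t} + (B (t+1) − B t) + ζ_t)`. -/
theorem uniform_input_mae_bound
    (m : ℕ) (hm : 2 ≤ m)
    (B : ℕ → ℝ)
    (hB : ∀ i j : ℕ, 1 ≤ i → i < j → j ≤ m → B i < B j)
    (hsym : ∀ i : ℕ, 1 ≤ i → i ≤ m → B i = -B (m + 1 - i))
    (c Δ : ℝ) (hc : 0 < c) (hΔ : 0 < Δ)
    (hB1 : B 1 = -c - Δ) (hBm : B m = c + Δ)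
    (s t : ℕ) (hs2 : 2 ≤ s) (hst : s ≤ t) (ht : t ≤ m - 1)
    (hs_lt : B (s - 1) < -c) (hs_le : -c ≤ B s)
    (ht_le : B t ≤ c) (ht_lt : c < B (t + 1))
    (q : ℕ → ℕ → ℝ)
    (hq_nonneg : ∀ n i : ℕ, 1 ≤ n → n ≤ m → 0 ≤ q n i)
    (hq_sum : ∀ n : ℕ, 1 ≤ n → n ≤ m → ∑ i ∈ Finset.Icc 1 n, q n i = 1) :
    (∫ x in (-c)..c, ∑ i ∈ Finset.Icc 1 m, pFun m B q x i * |B i - x|) ≤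
      (B s + c) * (zeta B q (m - s + 1) + (B s - B (s - 1)) + zeta B q (s - 1))
      + ∑ n ∈ Finset.Icc s (t - 1),
          (B (n + 1) - B n) * (zeta B q (m - n) + (B (n + 1) - B n) + zeta B q n)
      + (c - B t) * (zeta B q (m - t) + (B (t + 1) - B t) + zeta B q t) := by
  have hstep : ∀ n, s ≤ n → n ≤ t →
      IntervalIntegrable (fun x => cellBound m B q (binIdx m B x)) MeasureTheory.volume (-c) (B n) ∧
      ∫ x in (-c)..(B n), cellBound m B q (binIdx m B x)
        = (B s + c) * cellBound m B q (s - 1)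
          + ∑ k ∈ Finset.Icc s (n - 1), (B (k + 1) - B k) * cellBound m B q k := by
    intro n hn
    induction n, hn using Nat.le_induction with
    | base =>
      intro _
      obtain ⟨hi, he⟩ := integral_cell hB (cellBound m B q) (j := s - 1) (a := -c) (b := B s)
        (by omega) (by omega) hs_le hs_lt.le (by rw [show s - 1 + 1 = s by omega])
      refine ⟨hi, ?_⟩
      rw [he, Finset.Icc_eq_empty (by omega)]
      simp
    | succ n hn ih =>
      intro hnt
      obtain ⟨hi, he⟩ := ih (by omega)
      obtain ⟨hi', he'⟩ := integral_cell hB (cellBound m B q) (j := n) (a := B n) (b := B (n + 1))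
        (by omega) (by omega) (hB n (n + 1) (by omega) (by omega) (by omega)).le le_rfl le_rfl
      refine ⟨hi.trans hi', ?_⟩
      rw [← intervalIntegral.integral_add_adjacent_intervals hi hi', he, he',
        show n + 1 - 1 = n - 1 + 1 by omega, Finset.sum_Icc_succ_top (by omega),
        show n - 1 + 1 = n by omega]
      ring
  obtain ⟨hi, he⟩ := hstep t hst le_rfl
  obtain ⟨hi', he'⟩ := integral_cell hB (cellBound m B q) (j := t) (a := B t) (b := c)
    (by omega) (by omega) ht_le le_rfl ht_lt.le
  have hpt : ∀ x ∈ Set.Ioc (-c) c,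
      0 ≤ ∑ i ∈ Finset.Icc 1 m, pFun m B q x i * |B i - x| ∧
      ∑ i ∈ Finset.Icc 1 m, pFun m B q x i * |B i - x| ≤ cellBound m B q (binIdx m B x) := by
    intro x hx
    obtain ⟨h1, h2, h3, h4⟩ := binIdx_spec (m := m) (B := B) (x := x) hm
      (by rw [hB1]; linarith [hx.1]) (by rw [hBm]; linarith [hx.2])
    exact abs_error_nonneg_and_le hB hsym hq_nonneg hq_sum h1 h2 h3 h4
  have hle : (∫ x in (-c)..c, ∑ i ∈ Finset.Icc 1 m, pFun m B q x i * |B i - x|) ≤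
      ∫ x in (-c)..c, cellBound m B q (binIdx m B x) := by
    rw [intervalIntegral.integral_of_le (by linarith), intervalIntegral.integral_of_le (by linarith)]
    -- only the dominating step function has to be integrable, since the error is nonnegative
    refine MeasureTheory.integral_mono_of_nonneg ?_ (hi.trans hi').1 ?_
    · exact (MeasureTheory.ae_restrict_iff' measurableSet_Ioc).2 (.of_forall fun x hx => (hpt x hx).1)
    · exact (MeasureTheory.ae_restrict_iff' measurableSet_Ioc).2 (.of_forall fun x hx => (hpt x hx).2)
  refine hle.trans (le_of_eq ?_)
  rw [← intervalIntegral.integral_add_adjacent_intervals hi hi', he, he']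
  simp only [cellBound]
  rw [show m - (s - 1) = m - s + 1 by omega, show s - 1 + 1 = s by omega]
end

section
/- (Upper bound on output probabilities under the linear constraints of Theorem 6) Assume: (i) q_j(i) ≥ q_{j+1}(i) for all 1 ≤ i ≤ j ≤ m−1; (ii) q_j(i) ≤ q_j(i+1) for all 1 ≤ i < j ≤ m; (iii) q_i(i) ≥ q_{i+1}(i+1) for all i with s ≤ i ≤ t−1; and (iv) q_{m−k}(m−r+1)·(B_r − B_k) ≥ q_{m−k−1}(m−r+1)·(B_r − B_{k+1}) for all k with s ≤ k ≤ t and all r with k+2 ≤ r ≤ m. Then for every x ∈ [−c, c] and every i ∈ {1,…,m}, p(x,i) ≤ max( p(−c, s−1), q_s(s) ). -/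
/-!
The argument uses two monotonicity properties and a reflection.

Let `x` lie in the cell `[B j, B (j+1))`; since `x ∈ [-c, c]`, one has `s - 1 ≤ j ≤ t`. For an output
`i ≤ j`, both `q j i` and `(B r - x) / (B r - B i)` increase with `i`, so `p(x, i)` is at most the
value at `i = j`, called `diagProb j x` below, which decreases in `x`. If `j = s - 1`, then
`x ≥ -c` bounds it by `p(-c, s-1)`. If `j ≥ s`, then `x ≥ B j` bounds it by its value `q j j` at
`x = B j`, which is at most `q s s` by the diagonal constraint (`diagProb_le_max`).

For an output `i ≥ j + 1`, the same comparison bounds `p(x, i)` by `p(x, j+1)`. By the symmetry of the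
bins this equals `diagProb (m-j) (-x)`, and `m - j` again lies between `s - 1` and `t = m + 1 - s`,
so the bound above applies once more.
-/

open Finset

/-- The probability `p(x, j)` of rounding down to the nearest bin `B j`, for `x` in the cell of index
`j`; as a formula it makes sense for every `x`. -/
noncomputable def diagProb (m : ℕ) (B : ℕ → ℝ) (q : ℕ → ℕ → ℝ) (j : ℕ) (x : ℝ) : ℝ :=
  q j j * ∑ r ∈ Finset.Icc (j + 1) m, q (m - j) (m - r + 1) * ((B r - x) / (B r - B j))

lemma sum_Icc_reflect (m j : ℕ) (f : ℕ → ℝ) :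
    ∑ r ∈ Finset.Icc (j + 1) m, f (m - r + 1) = ∑ i ∈ Finset.Icc 1 (m - j), f i := by
  refine Finset.sum_nbij' (fun r => m - r + 1) (fun i => m + 1 - i) ?_ ?_ ?_ ?_ ?_
  · intro r hr
    simp only [Finset.mem_Icc] at hr ⊢
    omega
  · intro r hr
    simp only [Finset.mem_Icc] at hr ⊢
    omega
  · intro r hr
    simp only [Finset.mem_Icc] at hr
    omega
  · intro r hr
    simp only [Finset.mem_Icc] at hr
    omega
  · intro r _
    rfl

lemma weight_mono {m : ℕ} {q : ℕ → ℕ → ℝ}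
    (h2 : ∀ i j : ℕ, 1 ≤ i → i < j → j ≤ m → q j i ≤ q j (i + 1))
    {i k j : ℕ} (hi : 1 ≤ i) (hik : i ≤ k) (hkj : k ≤ j) (hj : j ≤ m) : q j i ≤ q j k := by
  induction k, hik using Nat.le_induction with
  | base => exact le_rfl
  | succ k hik ih => exact (ih (by omega)).trans (h2 k j (by omega) (by omega) hj)

lemma diag_le {s t : ℕ} {q : ℕ → ℕ → ℝ}
    (h3 : ∀ i : ℕ, s ≤ i → i ≤ t - 1 → q (i + 1) (i + 1) ≤ q i i)
    {j : ℕ} (hsj : s ≤ j) (hjt : j ≤ t) : q j j ≤ q s s := by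
  induction j, hsj using Nat.le_induction with
  | base => exact le_rfl
  | succ k hk ih => exact (h3 k hk (by omega)).trans (ih (by omega))

lemma diagProb_antitone {m : ℕ} {B : ℕ → ℝ} {q : ℕ → ℕ → ℝ}
    (hB : ∀ i j : ℕ, 1 ≤ i → i < j → j ≤ m → B i < B j)
    (hq : ∀ n i : ℕ, 1 ≤ n → n ≤ m → 0 ≤ q n i)
    {j : ℕ} (hj : 1 ≤ j) (hjm : j < m) {x y : ℝ} (hxy : x ≤ y) :
    diagProb m B q j y ≤ diagProb m B q j x := by
  unfold diagProb
  refine mul_le_mul_of_nonneg_left (Finset.sum_le_sum fun r hr => ?_) (hq _ _ hj hjm.le)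
  rw [Finset.mem_Icc] at hr
  have hBr := hB j r hj (by omega) hr.2
  refine mul_le_mul_of_nonneg_left ?_ (hq _ _ (by omega) (by omega))
  exact div_le_div_of_nonneg_right (by linarith) (by linarith)

/-- At `x = B j` all the ratios are `1`, and the weights `q (m - j)` add up to `1`. -/
lemma diagProb_self {m : ℕ} {B : ℕ → ℝ} {q : ℕ → ℕ → ℝ}
    (hB : ∀ i j : ℕ, 1 ≤ i → i < j → j ≤ m → B i < B j)
    (hsum : ∀ n : ℕ, 1 ≤ n → n ≤ m → ∑ i ∈ Finset.Icc 1 n, q n i = 1)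
    {j : ℕ} (hj : 1 ≤ j) (hjm : j < m) : diagProb m B q j (B j) = q j j := by
  unfold diagProb
  have h : ∑ r ∈ Finset.Icc (j + 1) m, q (m - j) (m - r + 1) * ((B r - B j) / (B r - B j))
      = ∑ r ∈ Finset.Icc (j + 1) m, q (m - j) (m - r + 1) := by
    refine Finset.sum_congr rfl fun r hr => ?_
    rw [Finset.mem_Icc] at hr
    have hBr := hB j r hj (by omega) hr.2
    rw [div_self (by linarith), mul_one]
  rw [h, sum_Icc_reflect m j (q (m - j)), hsum _ (by omega) (by omega), mul_one]

lemma diagProb_le_max {m : ℕ} {B : ℕ → ℝ} {q : ℕ → ℕ → ℝ} {s t : ℕ} {c : ℝ}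
    (hB : ∀ i j : ℕ, 1 ≤ i → i < j → j ≤ m → B i < B j)
    (hs2 : 2 ≤ s) (htm : t < m)
    (hq : ∀ n i : ℕ, 1 ≤ n → n ≤ m → 0 ≤ q n i)
    (hsum : ∀ n : ℕ, 1 ≤ n → n ≤ m → ∑ i ∈ Finset.Icc 1 n, q n i = 1)
    (h3 : ∀ i : ℕ, s ≤ i → i ≤ t - 1 → q (i + 1) (i + 1) ≤ q i i)
    {j : ℕ} (hsj : s - 1 ≤ j) (hjt : j ≤ t) {x : ℝ} (hcx : -c ≤ x) (hjx : B j ≤ x) :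
    diagProb m B q j x ≤ max (diagProb m B q (s - 1) (-c)) (q s s) := by
  rcases hsj.eq_or_lt with rfl | hlt
  · exact le_max_of_le_left (diagProb_antitone hB hq (by omega) (by omega) hcx)
  · refine le_max_of_le_right ?_
    calc diagProb m B q j x ≤ diagProb m B q j (B j) :=
          diagProb_antitone hB hq (by omega) (by omega) hjx
      _ = q j j := diagProb_self hB hsum (by omega) (by omega)
      _ ≤ q s s := diag_le h3 (by omega) hjt

lemma outProb_le_of_le {m : ℕ} {B : ℕ → ℝ} {q : ℕ → ℕ → ℝ}
    (hB : ∀ i j : ℕ, 1 ≤ i → i < j → j ≤ m → B i < B j)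
    (hq : ∀ n i : ℕ, 1 ≤ n → n ≤ m → 0 ≤ q n i)
    (h2 : ∀ i j : ℕ, 1 ≤ i → i < j → j ≤ m → q j i ≤ q j (i + 1))
    {i j : ℕ} (hi : 1 ≤ i) (hij : i ≤ j) (hjm : j < m) {x : ℝ} (hx : x ≤ B (j + 1)) :
    outProb m B q j x i ≤ diagProb m B q j x := by
  have hBmono : ∀ a b : ℕ, 1 ≤ a → a ≤ b → b ≤ m → B a ≤ B b := fun a b ha hab hb =>
    hab.eq_or_lt.elim (fun h => h ▸ le_rfl) fun h => (hB a b ha h hb).le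
  unfold outProb diagProb
  rw [if_pos hij]
  have key : ∀ r ∈ Finset.Icc (j + 1) m, 0 ≤ q (m - j) (m - r + 1) ∧
      0 ≤ (B r - x) / (B r - B i) ∧ (B r - x) / (B r - B i) ≤ (B r - x) / (B r - B j) := by
    intro r hr
    rw [Finset.mem_Icc] at hr
    have h5 := hBmono i j hi hij hjm.le
    have h6 := hB j r (by omega) (by omega) hr.2
    have h7 := hBmono (j + 1) r (by omega) hr.1 hr.2
    exact ⟨hq _ _ (by omega) (by omega), div_nonneg (by linarith) (by linarith),
      div_le_div_of_nonneg_left (by linarith) (by linarith) (by linarith)⟩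
  refine mul_le_mul (weight_mono h2 hi hij le_rfl hjm.le) (Finset.sum_le_sum fun r hr => ?_)
    (Finset.sum_nonneg fun r hr => ?_) (hq _ _ (by omega) (by omega))
  · exact mul_le_mul_of_nonneg_left (key r hr).2.2 (key r hr).1
  · exact mul_nonneg (key r hr).1 (key r hr).2.1

/-- The mechanism commutes with the reflection `x ↦ -x`, `i ↦ m + 1 - i`, which turns the cell of
index `j` into that of index `m - j`. -/
lemma outProb_reflect {m : ℕ} {B : ℕ → ℝ} (q : ℕ → ℕ → ℝ)
    (hsym : ∀ i : ℕ, 1 ≤ i → i ≤ m → B i = -B (m + 1 - i))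
    {i j : ℕ} (hji : j < i) (him : i ≤ m) (x : ℝ) :
    outProb m B q j x i = outProb m B q (m - j) (-x) (m + 1 - i) := by
  unfold outProb
  rw [if_neg (by omega), if_pos (by omega)]
  congr 1
  have hmj : m - (m - j) = j := by omega
  rw [hmj]
  have h := sum_Icc_reflect m (m - j) (fun l => q j l * ((x - B l) / (B i - B l)))
  rw [hmj] at h
  rw [← h]
  refine Finset.sum_congr rfl fun r hr => ?_
  rw [Finset.mem_Icc] at hr
  have e1 : B r = -B (m - r + 1) := by
    rw [hsym r (by omega) hr.2]
    congr 2
    omega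
  rw [hsym i (by omega) him, e1]
  congr 2 <;> ring

lemma binIdx_spec_s17 {m : ℕ} {B : ℕ → ℝ} {x : ℝ} {k : ℕ} (hk : 1 ≤ k) (hkm : k ≤ m - 1)
    (hkx : B k ≤ x) (hxm : x < B m) :
    k ≤ binIdx m B x ∧ binIdx m B x ≤ m - 1 ∧ B (binIdx m B x) ≤ x ∧
      x < B (binIdx m B x + 1) := by
  have hle : ∀ l : ℕ, 1 ≤ l → l ≤ m - 1 → B l ≤ x → l ≤ binIdx m B x := fun l hl hlm hlx =>
    Finset.le_sup (f := id) (Finset.mem_filter.2 ⟨Finset.mem_Icc.2 ⟨hl, hlm⟩, hlx⟩)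
  have hne : ((Finset.Icc 1 (m - 1)).filter (fun j => B j ≤ x)).Nonempty :=
    ⟨k, Finset.mem_filter.2 ⟨Finset.mem_Icc.2 ⟨hk, hkm⟩, hkx⟩⟩
  obtain ⟨j, hj, hje⟩ := Finset.exists_mem_eq_sup _ hne id
  have hbin : binIdx m B x = j := hje
  rw [Finset.mem_filter, Finset.mem_Icc] at hj
  refine ⟨hle k hk hkm hkx, by omega, hbin ▸ hj.2, ?_⟩
  by_contra! hcon
  by_cases hlast : binIdx m B x + 1 ≤ m - 1
  · have := hle _ (by omega) hlast hcon
    omega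
  · have : binIdx m B x + 1 = m := by omega
    rw [this] at hcon
    linarith

/-- (Upper bound on output probabilities under the linear constraints of Theorem 6)
Under constraints (i) `q_j(i) ≥ q_{j+1}(i)`, (ii) `q_j(i) ≤ q_j(i+1)`,
(iii) `q_i(i) ≥ q_{i+1}(i+1)` for `s ≤ i ≤ t−1`, and (iv)
`q_{m−k}(m−r+1)(B r − B k) ≥ q_{m−k−1}(m−r+1)(B r − B (k+1))` for `s ≤ k ≤ t`, `k+2 ≤ r ≤ m`,
we have `p(x,i) ≤ max(p(−c, s−1), q_s(s))` for all `x ∈ [−c,c]`, `i ∈ {1,…,m}`. -/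
theorem output_prob_max_bound_thm6
    (m : ℕ) (hm : 4 ≤ m)
    (B : ℕ → ℝ)
    (hB : ∀ i j : ℕ, 1 ≤ i → i < j → j ≤ m → B i < B j)
    (hsym : ∀ i : ℕ, 1 ≤ i → i ≤ m → B i = -B (m + 1 - i))
    (c : ℝ) (hc : 0 < c)
    (s t : ℕ) (hs2 : 2 ≤ s) (hst : s ≤ t) (ht : t ≤ m - 1)
    (hs_lt : B (s - 1) < -c) (hs_gt : -c < B s)
    (ht_lt : B t < c) (ht_gt : c < B (t + 1))
    (q : ℕ → ℕ → ℝ)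
    (hq_nonneg : ∀ n i : ℕ, 1 ≤ n → n ≤ m → 0 ≤ q n i)
    (hq_sum : ∀ n : ℕ, 1 ≤ n → n ≤ m → ∑ i ∈ Finset.Icc 1 n, q n i = 1)
    (h1 : ∀ i j : ℕ, 1 ≤ i → i ≤ j → j ≤ m - 1 → q (j + 1) i ≤ q j i)
    (h2 : ∀ i j : ℕ, 1 ≤ i → i < j → j ≤ m → q j i ≤ q j (i + 1))
    (h3 : ∀ i : ℕ, s ≤ i → i ≤ t - 1 → q (i + 1) (i + 1) ≤ q i i)
    (h4 : ∀ k r : ℕ, s ≤ k → k ≤ t → k + 2 ≤ r → r ≤ m →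
      q (m - k - 1) (m - r + 1) * (B r - B (k + 1)) ≤ q (m - k) (m - r + 1) * (B r - B k)) :
    ∀ x ∈ Set.Icc (-c) c, ∀ i ∈ Finset.Icc 1 m,
      pFun m B q x i ≤ max (pFun m B q (-c) (s - 1)) (q s s) := by
  intro x hx i hi
  rw [Finset.mem_Icc] at hi
  obtain ⟨hx1, hx2⟩ := hx
  have hBmono : ∀ a b : ℕ, 1 ≤ a → a ≤ b → b ≤ m → B a ≤ B b := fun a b ha hab hb =>
    hab.eq_or_lt.elim (fun h => h ▸ le_rfl) fun h => (hB a b ha h hb).le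
  have hcm : c < B m := ht_gt.trans_le (hBmono _ _ (by omega) (by omega) le_rfl)
  -- `B t < c < B (t+1)` and `B (m+1-s) < c < B (m+2-s)` locate `c` in the same cell.
  have htms : t = m + 1 - s := by
    have e1 := hsym s (by omega) (by omega)
    have e2 := hsym (s - 1) (by omega) (by omega)
    rw [show m + 1 - (s - 1) = m + 1 - s + 1 by omega] at e2
    rcases lt_trichotomy t (m + 1 - s) with h | h | h
    · have := hBmono (t + 1) (m + 1 - s) (by omega) (by omega) (by omega)
      linarith
    · exact h
    · have := hBmono (m + 1 - s + 1) t (by omega) (by omega) (by omega)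
      linarith
  have hRHS : pFun m B q (-c) (s - 1) = diagProb m B q (s - 1) (-c) := by
    obtain ⟨ha, hb, hd, -⟩ := binIdx_spec_s17 (m := m) (B := B) (x := -c) (k := s - 1)
      (by omega) (by omega) hs_lt.le (by linarith)
    have : binIdx m B (-c) = s - 1 := by
      by_contra hne
      have := hBmono s (binIdx m B (-c)) (by omega) (by omega) (by omega)
      linarith
    rw [pFun, this, outProb, if_pos le_rfl, diagProb]
  rw [hRHS, pFun]
  obtain ⟨hsj, hjm, hjx, hxj⟩ := binIdx_spec_s17 (m := m) (B := B) (x := x) (k := s - 1)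
    (by omega) (by omega) (by linarith) (by linarith)
  generalize binIdx m B x = j at *
  have hjt : j ≤ t := by
    by_contra hcon
    have := hBmono (t + 1) j (by omega) (by omega) (by omega)
    linarith
  rcases le_or_gt i j with hij | hij
  · exact (outProb_le_of_le hB hq_nonneg h2 hi.1 hij (by omega) hxj.le).trans
      (diagProb_le_max hB hs2 (by omega) hq_nonneg hq_sum h3 hsj hjt hx1 hjx)
  · have e1 := hsym j (by omega) (by omega)
    have e2 := hsym (j + 1) (by omega) (by omega)
    rw [show m + 1 - j = m - j + 1 by omega] at e1
    rw [show m + 1 - (j + 1) = m - j by omega] at e2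
    rw [outProb_reflect q hsym hij hi.2]
    exact (outProb_le_of_le hB hq_nonneg h2 (by omega) (by omega) (by omega) (by linarith)).trans
      (diagProb_le_max hB hs2 (by omega) hq_nonneg hq_sum h3 (by omega) (by omega)
        (by linarith) (by linarith))
end
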